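/- Let r ∈ ℝ, T > 0, p > 4, R > 0, N ≥ 1, and let σ : [0,∞)×ℝ → ℝ be measurable with |σ(x,u)| ≤ R(e^{rx}+|u|) for all x ≥ 0, u ∈ ℝ. Then there exists a constant C = C(r,p,T) > 0 such that for every measurable ġ : [0,T]×[0,∞) → ℝ with ∫_0^T ∫_0^∞ ġ(s,y)² dy ds ≤ N² and every continuous u : [0,T]×[0,∞) → ℝ with ‖u‖_{C_r^T} < ∞, ( sup_{t∈[0,T]} sup_{x≥0} e^{−rx} | ∫_0^t ∫_0^∞ G(t−s,x,y) σ(y,u(s,y)) ġ(s,y) dy ds | )^p ≤ C R^p N^p T^{(p−4)/4} ∫_0^T ( 1 + ‖u‖_{C_r^t} )^p dt. -/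

import Mathlib

/-!
The weighted convolution is dominated pointwise: the growth bound on `σ` gives
`e^{-rx} |G(t-s,x,y) σ(y,u(s,y)) ġ(s,y)| ≤ |G_r(t-s,x,y)| · R (1 + ‖u‖_{C_r^s}) · |ġ(s,y)|`
(`weighted_integrand_le`). Completing the square in the Gaussian gives
`∫₀^∞ G_r(τ,x,y)² dy ≤ e^{4r²T} (4πτ)^{-1/2}` for `τ ≤ T` (`lintegral_Gr_sq_le`). Cauchy–Schwarz in
`(s,y)` therefore bounds the convolution by
`R N (∫₀ᵗ K (4π(t-s))^{-1/2} (1 + ‖u‖_{C_r^s})² ds)^{1/2}` with `K = e^{4r²T}`, and Hölder in `s` with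
exponents `p/(p-2)` and `p/2` (`holder_chain`) separates the kernel from the norm of `u`. The
remaining kernel integral `∫₀ᵀ τ^{-p/(2(p-2))} dτ` converges exactly because `p > 4`
(`lintegral_time_kernel_lt_top`). Since the constant may depend on `T`, the factor `T^{(p-4)/4}` is
divided out of it.

The estimates are carried out for lower Lebesgue integrals in `[0,∞]`, where no integrability of the
convolution integrand has to be established.
-/

open MeasureTheory Real Set Filter

/-- Dirichlet heat kernel on `[0,∞)`. -/
noncomputable def G (t x y : ℝ) : ℝ :=
  (Real.sqrt (4 * Real.pi * t))⁻¹ *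
    (Real.exp (-(x - y) ^ 2 / (4 * t)) - Real.exp (-(x + y) ^ 2 / (4 * t)))

/-- Exponentially weighted kernel `G_r(t,x,y) = e^{-r(x-y)} G(t,x,y)`. -/
noncomputable def Gr (r t x y : ℝ) : ℝ := Real.exp (-r * (x - y)) * G t x y

/-- Weighted sup norm `‖v‖_{L_r} = sup_{x ≥ 0} e^{-rx}|v(x)|`. -/
noncomputable def LrNorm (r : ℝ) (v : ℝ → ℝ) : ℝ :=
  sSup ((fun x => Real.exp (-r * x) * |v x|) '' Ici 0)

/-- Weighted sup norm `‖u‖_{C_r^T} = sup_{t ∈ [0,T]} sup_{x ≥ 0} e^{-rx}|u(t,x)|`. -/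
noncomputable def CrNorm (r T : ℝ) (u : ℝ → ℝ → ℝ) : ℝ :=
  sSup ((fun q : ℝ × ℝ => Real.exp (-r * q.2) * |u q.1 q.2|) '' (Icc 0 T ×ˢ Ici 0))

/-- `‖u‖_{C_r^T} < ∞`, expressed as boundedness of the weighted values. -/
def CrBdd (r T : ℝ) (u : ℝ → ℝ → ℝ) : Prop :=
  BddAbove ((fun q : ℝ × ℝ => Real.exp (-r * q.2) * |u q.1 q.2|) '' (Icc 0 T ×ˢ Ici 0))

/-! ### Hölder's inequality -/

/-- Two applications of Cauchy–Schwarz (in `y`, then in `s`) followed by Hölder in `s` with exponents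
`p / (p - 2)` and `p / 2`. -/
theorem holder_chain {μ ν : Measure ℝ} [SFinite ν] {p : ℝ} (hp : 4 < p)
    {a γ : ℝ → ℝ → ENNReal} {A b : ℝ → ENNReal}
    (ha : Measurable (Function.uncurry a)) (hγ : Measurable (Function.uncurry γ))
    (hA : Measurable A) (hb : AEMeasurable b μ)
    (haA : ∀ᵐ s ∂μ, ∫⁻ y, a s y ^ (2:ℝ) ∂ν ≤ A s) :
    (∫⁻ s, ∫⁻ y, a s y * b s * γ s y ∂ν ∂μ) ^ p ≤
      (∫⁻ s, A s ^ (p / (p - 2)) ∂μ) ^ ((p - 2) / 2) * (∫⁻ s, b s ^ p ∂μ) *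
        (∫⁻ s, ∫⁻ y, γ s y ^ (2:ℝ) ∂ν ∂μ) ^ (p / 2) := by
  have h22 : Real.HolderConjugate 2 2 := by
    rw [Real.holderConjugate_iff]; norm_num
  have hpq : Real.HolderConjugate (p / (p - 2)) (p / 2) := by
    rw [Real.holderConjugate_iff]
    have : 0 < p - 2 := by linarith
    constructor
    · rw [lt_div_iff₀ this]; linarith
    · field_simp; ring
  have hp0 : 0 < p := by linarith
  have hp2 : 0 < p - 2 := by linarith
  have inner : ∀ᵐ s ∂μ, ∫⁻ y, a s y * b s * γ s y ∂ν ≤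
      (A s ^ (1 / 2 : ℝ) * b s) * (∫⁻ y, γ s y ^ (2:ℝ) ∂ν) ^ (1 / 2 : ℝ) := by
    filter_upwards [haA] with s hs
    have has : Measurable (a s) := ha.comp measurable_prodMk_left
    have hgs : Measurable (γ s) := hγ.comp measurable_prodMk_left
    calc ∫⁻ y, a s y * b s * γ s y ∂ν = ∫⁻ y, b s * (a s * γ s) y ∂ν := by
          congr with y; simp only [Pi.mul_apply]; ring
      _ = b s * ∫⁻ y, (a s * γ s) y ∂ν := lintegral_const_mul _ (has.mul hgs)
      _ ≤ b s * ((∫⁻ y, a s y ^ (2:ℝ) ∂ν) ^ (1 / 2 : ℝ)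
            * (∫⁻ y, γ s y ^ (2:ℝ) ∂ν) ^ (1 / 2 : ℝ)) := by
          gcongr
          exact ENNReal.lintegral_mul_le_Lp_mul_Lq ν h22 has.aemeasurable hgs.aemeasurable
      _ ≤ b s * (A s ^ (1 / 2 : ℝ) * (∫⁻ y, γ s y ^ (2:ℝ) ∂ν) ^ (1 / 2 : ℝ)) := by
          gcongr
      _ = _ := by ring
  have hh : Measurable fun s => ∫⁻ y, γ s y ^ (2:ℝ) ∂ν :=
    Measurable.lintegral_prod_right' (f := fun q : ℝ × ℝ => γ q.1 q.2 ^ (2:ℝ))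
      (hγ.pow_const _)
  have outer : ∫⁻ s, ∫⁻ y, a s y * b s * γ s y ∂ν ∂μ ≤
      (∫⁻ s, A s * b s ^ (2:ℝ) ∂μ) ^ (1 / 2 : ℝ) *
        (∫⁻ s, ∫⁻ y, γ s y ^ (2:ℝ) ∂ν ∂μ) ^ (1 / 2 : ℝ) := by
    refine (lintegral_mono_ae inner).trans ?_
    refine (ENNReal.lintegral_mul_le_Lp_mul_Lq μ h22
      (f := fun s => A s ^ (1 / 2 : ℝ) * b s)
      (g := fun s => (∫⁻ y, γ s y ^ (2:ℝ) ∂ν) ^ (1 / 2 : ℝ))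
      ((hA.pow_const _).aemeasurable.mul hb) (hh.pow_const _).aemeasurable).trans ?_
    apply le_of_eq
    congr 3
    · ext s
      rw [ENNReal.mul_rpow_of_nonneg _ _ (by norm_num), ← ENNReal.rpow_mul]; norm_num
    · ext s
      rw [← ENNReal.rpow_mul]; norm_num
  have third : ∫⁻ s, A s * b s ^ (2:ℝ) ∂μ ≤
      (∫⁻ s, A s ^ (p / (p - 2)) ∂μ) ^ ((p - 2) / p) * (∫⁻ s, b s ^ p ∂μ) ^ (2 / p) := by
    refine (ENNReal.lintegral_mul_le_Lp_mul_Lq μ hpq hA.aemeasurable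
      (g := fun s => b s ^ (2:ℝ)) (hb.pow_const _)).trans ?_
    apply le_of_eq
    simp only [one_div_div, ← ENNReal.rpow_mul]
    rw [show 2 * (p / 2) = p by ring]
  calc _ ≤ ((∫⁻ s, A s * b s ^ (2:ℝ) ∂μ) ^ (1 / 2 : ℝ) *
        (∫⁻ s, ∫⁻ y, γ s y ^ (2:ℝ) ∂ν ∂μ) ^ (1 / 2 : ℝ)) ^ p := by gcongr
    _ ≤ ((((∫⁻ s, A s ^ (p / (p - 2)) ∂μ) ^ ((p - 2) / p) * (∫⁻ s, b s ^ p ∂μ) ^ (2 / p)))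
          ^ (1 / 2 : ℝ) * (∫⁻ s, ∫⁻ y, γ s y ^ (2:ℝ) ∂ν ∂μ) ^ (1 / 2 : ℝ)) ^ p := by gcongr
    _ = _ := by
      rw [ENNReal.mul_rpow_of_nonneg _ _ hp0.le, ENNReal.mul_rpow_of_nonneg _ _ (by norm_num),
        ENNReal.mul_rpow_of_nonneg _ _ hp0.le]
      simp only [← ENNReal.rpow_mul]
      rw [show (p - 2) / p * (1 / 2) * p = (p - 2) / 2 by field_simp,
        show 2 / p * (1 / 2) * p = 1 by field_simp, show 1 / 2 * p = p / 2 by ring,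
        ENNReal.rpow_one]

/-! ### Kernel estimates -/

/-- On the half-line the image term only decreases the kernel, so `G` is dominated by the Gaussian
on the whole line. -/
theorem abs_G_le {τ x y : ℝ} (hτ : 0 ≤ τ) (hx : 0 ≤ x) (hy : 0 ≤ y) :
    |G τ x y| ≤ (√(4 * π * τ))⁻¹ * exp (-(x - y) ^ 2 / (4 * τ)) := by
  have h1 : exp (-(x + y) ^ 2 / (4 * τ)) ≤ exp (-(x - y) ^ 2 / (4 * τ)) := by
    apply exp_le_exp.2
    refine div_le_div_of_nonneg_right ?_ (by positivity)
    nlinarith [mul_nonneg hx hy]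
  have h2 := exp_pos (-(x + y) ^ 2 / (4 * τ))
  rw [G, abs_mul, abs_of_nonneg (by positivity), abs_of_nonneg (by linarith)]
  gcongr
  linarith

/-- The weight `e^{-2r(x-y)}` is absorbed into half of the Gaussian exponent by completing the square,
at the cost of the factor `e^{4r²τ}`. -/
theorem sq_Gr_le {r τ x y : ℝ} (hτ : 0 < τ) (hx : 0 ≤ x) (hy : 0 ≤ y) :
    Gr r τ x y ^ 2 ≤ (4 * π * τ)⁻¹ * exp (4 * r ^ 2 * τ) * exp (-(4 * τ)⁻¹ * (x - y) ^ 2) := by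
  have h := abs_G_le hτ.le hx hy
  have h0 : (0:ℝ) < 4 * π * τ := by positivity
  calc Gr r τ x y ^ 2 = exp (-r * (x - y)) ^ 2 * |G τ x y| ^ 2 := by
        rw [Gr, mul_pow, sq_abs]
    _ ≤ exp (-r * (x - y)) ^ 2 * ((√(4 * π * τ))⁻¹ * exp (-(x - y) ^ 2 / (4 * τ))) ^ 2 := by
        gcongr
    _ = (4 * π * τ)⁻¹ * exp (2 * (-r * (x - y)) + 2 * (-(x - y) ^ 2 / (4 * τ))) := by
        rw [mul_pow, inv_pow, sq_sqrt h0.le, ← exp_nat_mul, ← exp_nat_mul, exp_add]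
        push_cast; ring
    _ ≤ (4 * π * τ)⁻¹ * exp (4 * r ^ 2 * τ + -(4 * τ)⁻¹ * (x - y) ^ 2) := by
        refine mul_le_mul_of_nonneg_left (exp_le_exp.2 ?_) (by positivity)
        have : 4 * r ^ 2 * τ + -(4 * τ)⁻¹ * (x - y) ^ 2 -
            (2 * (-r * (x - y)) + 2 * (-(x - y) ^ 2 / (4 * τ))) =
              (4 * τ)⁻¹ * (x - y + 4 * r * τ) ^ 2 := by
          field_simp; ring
        have h3 : 0 ≤ (4 * τ)⁻¹ * (x - y + 4 * r * τ) ^ 2 := by positivity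
        linarith
    _ = _ := by rw [exp_add]; ring

/-- Integrating `sq_Gr_le` over `y` leaves a singularity of order `τ^{-1/2}`. At `τ = 0` both sides
vanish because `0⁻¹ = 0`. -/
theorem lintegral_Gr_sq_le {r T τ x : ℝ} (h0 : 0 ≤ τ) (hτT : τ ≤ T) (hx : 0 ≤ x) :
    ∫⁻ y in Ioi (0:ℝ), ‖Gr r τ x y‖ₑ ^ (2:ℝ) ≤
      ENNReal.ofReal (exp (4 * r ^ 2 * T) * (√(4 * π * τ))⁻¹) := by
  rcases h0.eq_or_lt with rfl | hτ
  · simp [Gr, G]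
  have hb : (0:ℝ) < (4 * τ)⁻¹ := by positivity
  have hint : Integrable fun y : ℝ => (4 * π * τ)⁻¹ * exp (4 * r ^ 2 * τ) *
      exp (-(4 * τ)⁻¹ * (x - y) ^ 2) :=
    ((integrable_exp_neg_mul_sq hb).comp_sub_left x).const_mul _
  calc ∫⁻ y in Ioi (0:ℝ), ‖Gr r τ x y‖ₑ ^ (2:ℝ)
      ≤ ∫⁻ y in Ioi (0:ℝ), ENNReal.ofReal ((4 * π * τ)⁻¹ * exp (4 * r ^ 2 * τ) *
          exp (-(4 * τ)⁻¹ * (x - y) ^ 2)) := by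
        refine setLIntegral_mono' measurableSet_Ioi fun y hy => ?_
        rw [ENNReal.rpow_two, Real.enorm_eq_ofReal_abs, ← ENNReal.ofReal_pow (abs_nonneg _),
          sq_abs]
        exact ENNReal.ofReal_le_ofReal (sq_Gr_le hτ hx (le_of_lt hy))
    _ ≤ ∫⁻ y, ENNReal.ofReal ((4 * π * τ)⁻¹ * exp (4 * r ^ 2 * τ) *
          exp (-(4 * τ)⁻¹ * (x - y) ^ 2)) := setLIntegral_le_lintegral _ _
    _ = ENNReal.ofReal (exp (4 * r ^ 2 * τ) * (√(4 * π * τ))⁻¹) := by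
        rw [← ofReal_integral_eq_lintegral_ofReal hint
          (Eventually.of_forall fun y => by positivity), integral_const_mul,
          integral_sub_left_eq_self (fun z => exp (-(4 * τ)⁻¹ * z ^ 2)) volume x,
          integral_gaussian, div_inv_eq_mul]
        congr 1
        have h4 : (0:ℝ) < 4 * π * τ := by positivity
        rw [show π * (4 * τ) = 4 * π * τ by ring]
        have hs : 0 < √(4 * π * τ) := sqrt_pos.2 h4
        have := sq_sqrt h4.le
        rw [show (4 * π * τ)⁻¹ = (√(4 * π * τ) ^ 2)⁻¹ by rw [this]]
        field_simp
    _ ≤ _ := by gcongr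

theorem lintegral_time_kernel_lt_top {K T q : ℝ} (hT : 0 < T) (hK : 0 ≤ K)
    (hq : 0 < q) (hq2 : q < 2) :
    ∫⁻ τ in Ioc 0 T, ENNReal.ofReal (K * (√(4 * π * τ))⁻¹) ^ q < ⊤ := by
  have hi : IntegrableOn
      (fun τ : ℝ => K ^ q * (4 * π) ^ (-(q / 2)) * τ ^ (-(q / 2))) (Ioc 0 T) := by
    have := (intervalIntegral.intervalIntegrable_rpow' (a := 0) (b := T) (r := -(q / 2))
      (by linarith))
    rw [intervalIntegrable_iff_integrableOn_Ioc_of_le hT.le] at this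
    exact this.const_mul _
  refine lt_of_eq_of_lt ?_ hi.lintegral_lt_top
  refine setLIntegral_congr_fun measurableSet_Ioc fun τ hτ => ?_
  have h0 : 0 < τ := hτ.1
  rw [ENNReal.ofReal_rpow_of_nonneg (by positivity) hq.le, mul_rpow hK (by positivity),
    mul_assoc (K ^ q), ← mul_rpow (by positivity) h0.le, sqrt_eq_rpow, ← rpow_neg (by positivity),
    ← rpow_mul (by positivity)]
  congr 3
  ring

/-- Time reversal `s ↦ t - s`. The endpoint `s = t` is discarded as a null set. -/
theorem lintegral_time_kernel_le (f : ℝ → ENNReal) {t T : ℝ} (htT : t ≤ T) :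
    ∫⁻ s in Ioc 0 t, f (t - s) ≤ ∫⁻ τ in Ioc 0 T, f τ := by
  calc ∫⁻ s in Ioc 0 t, f (t - s) = ∫⁻ s in Ioo 0 t, f (t - s) := by
        rw [Measure.restrict_congr_set Ioo_ae_eq_Ioc]
    _ = ∫⁻ s, (Ioo 0 t).indicator f (t - s) := by
        rw [← lintegral_indicator measurableSet_Ioo]
        congr with s
        simp only [indicator, mem_Ioo, sub_pos, sub_lt_self_iff, and_comm]
    _ = ∫⁻ s in Ioo 0 t, f s := by
        rw [lintegral_sub_left_eq_self, lintegral_indicator measurableSet_Ioo]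
    _ ≤ _ := lintegral_mono_set (Ioo_subset_Ioc_self.trans (Ioc_subset_Ioc_right htT))

/-! ### The weighted sup norm as a function of time -/

theorem le_CrNorm {r T : ℝ} {u : ℝ → ℝ → ℝ} (hu : CrBdd r T u) {s y : ℝ}
    (hs : s ∈ Icc 0 T) (hy : 0 ≤ y) : exp (-r * y) * |u s y| ≤ CrNorm r s u :=
  le_csSup (hu.mono (image_mono (prod_mono_left (Icc_subset_Icc_right hs.2))))
    ⟨(s, y), ⟨⟨hs.1, le_rfl⟩, hy⟩, rfl⟩

theorem CrNorm_nonneg (r s : ℝ) (u : ℝ → ℝ → ℝ) : 0 ≤ CrNorm r s u := by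
  apply Real.sSup_nonneg
  rintro _ ⟨q, -, rfl⟩
  positivity

theorem CrNorm_monotoneOn {r T : ℝ} {u : ℝ → ℝ → ℝ} (hu : CrBdd r T u) :
    MonotoneOn (fun s => CrNorm r s u) (Icc 0 T) := by
  intro s hs t ht hst
  exact csSup_le_csSup (hu.mono (image_mono (prod_mono_left (Icc_subset_Icc_right ht.2))))
    ⟨_, (s, 0), ⟨⟨hs.1, le_rfl⟩, le_refl (0:ℝ)⟩, rfl⟩
    (image_mono (prod_mono_left (Icc_subset_Icc_right hst)))

theorem integrableOn_CrNorm {r T p : ℝ} (hp : 0 ≤ p) {u : ℝ → ℝ → ℝ}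
    (hu : CrBdd r T u) : IntegrableOn (fun s => (1 + CrNorm r s u) ^ p) (Ioc 0 T) := by
  have hm : MonotoneOn (fun s => (1 + CrNorm r s u) ^ p) (Icc 0 T) := by
    intro s hs t ht hst
    have := CrNorm_nonneg r s u
    have := CrNorm_monotoneOn hu hs ht hst
    simp only at this ⊢
    gcongr
  exact (hm.integrableOn_isCompact isCompact_Icc).mono_set Ioc_subset_Icc_self

/-! ### The convolution integrand -/

/-- The growth bound on `σ` turns the weight `e^{-rx}` into the kernel weight `e^{-r(x-y)}`, leaving a
factor that depends on time only. -/
theorem weighted_integrand_le {r T R : ℝ} {σ u g : ℝ → ℝ → ℝ} (hR : 0 < R)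
    (hσ : ∀ x ≥ (0:ℝ), ∀ u : ℝ, |σ x u| ≤ R * (exp (r * x) + |u|))
    (hu : CrBdd r T u) {s y : ℝ} (hs : s ∈ Icc 0 T) (hy : 0 ≤ y) (τ x : ℝ) :
    exp (-r * x) * |G τ x y * σ y (u s y) * g s y| ≤
      |Gr r τ x y| * (R * (1 + CrNorm r s u)) * |g s y| := by
  have h1 : |σ y (u s y)| ≤ exp (r * y) * (R * (1 + CrNorm r s u)) := by
    calc |σ y (u s y)| ≤ R * (exp (r * y) + |u s y|) := hσ y hy _
      _ = exp (r * y) * (R * (1 + exp (-r * y) * |u s y|)) := by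
        have : exp (r * y) * exp (-r * y) = 1 := by rw [← exp_add]; simp
        linear_combination (-R * |u s y|) * this
      _ ≤ _ := by gcongr; exact le_CrNorm hu hs hy
  calc exp (-r * x) * |G τ x y * σ y (u s y) * g s y|
      = exp (-r * x) * |G τ x y| * |σ y (u s y)| * |g s y| := by rw [abs_mul, abs_mul]; ring
    _ ≤ exp (-r * x) * |G τ x y| * (exp (r * y) * (R * (1 + CrNorm r s u))) * |g s y| := by
        gcongr
    _ = _ := by
        rw [Gr, abs_mul, abs_of_pos (exp_pos _), show -r * (x - y) = -r * x + r * y by ring,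
          exp_add]
        ring

theorem measurable_Gr (r t x : ℝ) :
    Measurable (Function.uncurry fun s y => ‖Gr r (t - s) x y‖ₑ) := by
  unfold Gr G Function.uncurry
  fun_prop

theorem lintegral_control_le {T N t : ℝ} {g : ℝ → ℝ → ℝ} (htT : t ≤ T)
    (hg : Measurable (Function.uncurry g))
    (hgi : IntegrableOn (fun q : ℝ × ℝ => (g q.1 q.2) ^ 2) (Ioc 0 T ×ˢ Ioi 0))
    (hgN : (∫ q in (Ioc (0:ℝ) T ×ˢ Ioi (0:ℝ)), (g q.1 q.2) ^ 2) ≤ N ^ 2) :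
    ∫⁻ s in Ioc 0 t, ∫⁻ y in Ioi (0:ℝ), ‖g s y‖ₑ ^ (2:ℝ) ≤ ENNReal.ofReal (N ^ 2) := by
  calc ∫⁻ s in Ioc 0 t, ∫⁻ y in Ioi (0:ℝ), ‖g s y‖ₑ ^ (2:ℝ)
      ≤ ∫⁻ s in Ioc 0 T, ∫⁻ y in Ioi (0:ℝ), ‖g s y‖ₑ ^ (2:ℝ) :=
        lintegral_mono_set (Ioc_subset_Ioc_right htT)
    _ = ∫⁻ q in (Ioc (0:ℝ) T ×ˢ Ioi (0:ℝ)), ‖g q.1 q.2‖ₑ ^ (2:ℝ) := by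
        rw [Measure.volume_eq_prod, ← Measure.prod_restrict, lintegral_prod]
        exact (hg.enorm.pow_const _).aemeasurable
    _ = ∫⁻ q in (Ioc (0:ℝ) T ×ˢ Ioi (0:ℝ)), ENNReal.ofReal ((g q.1 q.2) ^ 2) := by
        congr with q
        rw [ENNReal.rpow_two, Real.enorm_eq_ofReal_abs, ← ENNReal.ofReal_pow (abs_nonneg _),
          sq_abs]
    _ = ENNReal.ofReal (∫ q in (Ioc (0:ℝ) T ×ˢ Ioi (0:ℝ)), (g q.1 q.2) ^ 2) :=
        (ofReal_integral_eq_lintegral_ofReal hgi (Eventually.of_forall fun q => by positivity)).symm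
    _ ≤ _ := ENNReal.ofReal_le_ofReal hgN

/-! ### The growth estimate -/

/-- as in (5.7) of the paper: growth estimate for the diffusion convolution
term against an `L²` control `ġ`. -/
theorem stmt_18 (r T p : ℝ) (hT : 0 < T) (hp : 4 < p) :
    ∃ C > (0:ℝ), ∀ R N : ℝ, 0 < R → 1 ≤ N →
      ∀ σ : ℝ → ℝ → ℝ,
        Measurable (Function.uncurry σ) →
        (∀ x ≥ (0:ℝ), ∀ u : ℝ, |σ x u| ≤ R * (Real.exp (r * x) + |u|)) →
      ∀ g : ℝ → ℝ → ℝ,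
        Measurable (Function.uncurry g) →
        IntegrableOn (fun q : ℝ × ℝ => (g q.1 q.2) ^ 2) (Ioc 0 T ×ˢ Ioi 0) →
        (∫ q in (Ioc (0:ℝ) T ×ˢ Ioi (0:ℝ)), (g q.1 q.2) ^ 2) ≤ N ^ 2 →
      ∀ u : ℝ → ℝ → ℝ,
        ContinuousOn (Function.uncurry u) (Icc 0 T ×ˢ Ici 0) → CrBdd r T u →
        ∀ t ∈ Icc (0:ℝ) T, ∀ x ≥ (0:ℝ),
          (Real.exp (-r * x) *
              |∫ s in Ioc (0:ℝ) t, ∫ y in Ioi (0:ℝ), G (t - s) x y * σ y (u s y) * g s y|) ^ p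
            ≤ C * R ^ p * N ^ p * T ^ ((p - 4) / 4) *
                ∫ t' in Ioc (0:ℝ) T, (1 + CrNorm r t' u) ^ p := by
  have hp0 : 0 < p := by linarith
  have hp2 : 0 < p - 2 := by linarith
  set K : ℝ := exp (4 * r ^ 2 * T)
  set J : ENNReal := (∫⁻ τ in Ioc 0 T, ENNReal.ofReal (K * (√(4 * π * τ))⁻¹) ^ (p / (p - 2)))
    ^ ((p - 2) / 2) with hJ
  have hJtop : J ≠ ⊤ := by
    refine ENNReal.rpow_ne_top_of_nonneg (by positivity) (ne_of_lt ?_)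
    refine lintegral_time_kernel_lt_top hT (exp_pos _).le (by positivity) ?_
    -- `p / (p - 2) < 2` is exactly the condition `4 < p`.
    rw [div_lt_iff₀ hp2]; linarith
  have hTp : 0 < T ^ ((p - 4) / 4) := rpow_pos_of_pos hT _
  refine ⟨(J.toReal + 1) / T ^ ((p - 4) / 4), by positivity, ?_⟩
  intro R N hR hN σ _ hσ g hg hgi hgN u _ hu t ht x hx
  have hN0 : 0 < N := by linarith
  have hIcc : Ioc 0 t ⊆ Icc 0 T := fun s hs => ⟨hs.1.le, hs.2.trans ht.2⟩
  set b : ℝ → ENNReal := fun s => ENNReal.ofReal (R * (1 + CrNorm r s u)) with hb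
  have hbm : AEMeasurable b (volume.restrict (Ioc 0 t)) := by
    have : AEMeasurable (fun s => CrNorm r s u) (volume.restrict (Ioc 0 t)) :=
      aemeasurable_restrict_of_monotoneOn measurableSet_Ioc ((CrNorm_monotoneOn hu).mono hIcc)
    exact ((this.const_add 1).const_mul R).ennreal_ofReal
  set I : ℝ := ∫ s in Ioc (0:ℝ) t, ∫ y in Ioi (0:ℝ), G (t - s) x y * σ y (u s y) * g s y
  -- `‖∫ f‖ ≤ ∫⁻ ‖f‖` holds without integrability, so none is needed here.
  have hX : ENNReal.ofReal (exp (-r * x) * |I|) ≤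
      ∫⁻ s in Ioc 0 t, ∫⁻ y in Ioi (0:ℝ), ‖Gr r (t - s) x y‖ₑ * b s * ‖g s y‖ₑ := by
    calc ENNReal.ofReal (exp (-r * x) * |I|) = ENNReal.ofReal (exp (-r * x)) * ‖I‖ₑ := by
          rw [ENNReal.ofReal_mul (exp_pos _).le, Real.enorm_eq_ofReal_abs]
      _ ≤ ENNReal.ofReal (exp (-r * x)) * ∫⁻ s in Ioc 0 t, ∫⁻ y in Ioi (0:ℝ),
            ‖G (t - s) x y * σ y (u s y) * g s y‖ₑ := by
          gcongr
          refine (enorm_integral_le_lintegral_enorm _).trans (lintegral_mono fun s => ?_)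
          exact enorm_integral_le_lintegral_enorm _
      _ = ∫⁻ s in Ioc 0 t, ∫⁻ y in Ioi (0:ℝ), ENNReal.ofReal (exp (-r * x)) *
            ‖G (t - s) x y * σ y (u s y) * g s y‖ₑ := by
          simp only [lintegral_const_mul' _ _ ENNReal.ofReal_ne_top]
      _ ≤ _ := by
          refine setLIntegral_mono' measurableSet_Ioc fun s hs => ?_
          refine setLIntegral_mono' measurableSet_Ioi fun y hy => ?_
          have hn := CrNorm_nonneg r s u
          simp only [hb, Real.enorm_eq_ofReal_abs]
          rw [← ENNReal.ofReal_mul (exp_pos _).le, ← ENNReal.ofReal_mul (abs_nonneg _),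
            ← ENNReal.ofReal_mul (by positivity)]
          exact ENNReal.ofReal_le_ofReal
            (weighted_integrand_le hR hσ hu (hIcc hs) (le_of_lt hy) _ _)
  have hchain := holder_chain (μ := volume.restrict (Ioc 0 t)) (ν := volume.restrict (Ioi 0)) hp
    (a := fun s y => ‖Gr r (t - s) x y‖ₑ) (γ := fun s y => ‖g s y‖ₑ)
    (A := fun s => ENNReal.ofReal (K * (√(4 * π * (t - s)))⁻¹)) (b := b)
    (measurable_Gr r t x) hg.enorm (by fun_prop) hbm (by
      filter_upwards [ae_restrict_mem measurableSet_Ioc] with s hs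
      exact lintegral_Gr_sq_le (sub_nonneg.2 hs.2) (by linarith [hs.1, ht.2]) hx)
  have hA := lintegral_time_kernel_le
    (fun τ => ENNReal.ofReal (K * (√(4 * π * τ))⁻¹) ^ (p / (p - 2))) ht.2
  have hbp : ∫⁻ s in Ioc 0 t, b s ^ p ≤
      ENNReal.ofReal (R ^ p * ∫ t' in Ioc (0:ℝ) T, (1 + CrNorm r t' u) ^ p) := by
    rw [← integral_const_mul, ofReal_integral_eq_lintegral_ofReal
      ((integrableOn_CrNorm hp0.le hu).const_mul _)
      (Eventually.of_forall fun s => by have := CrNorm_nonneg r s u; positivity)]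
    refine (lintegral_mono_set (Ioc_subset_Ioc_right ht.2)).trans (le_of_eq ?_)
    congr with s
    have hn := CrNorm_nonneg r s u
    simp only [hb]
    rw [ENNReal.ofReal_rpow_of_nonneg (by positivity) hp0.le, mul_rpow hR.le (by positivity)]
  have hgp : (∫⁻ s in Ioc 0 t, ∫⁻ y in Ioi (0:ℝ), ‖g s y‖ₑ ^ (2:ℝ)) ^ (p / 2) ≤
      ENNReal.ofReal (N ^ p) := by
    refine (ENNReal.rpow_le_rpow (lintegral_control_le ht.2 hg hgi hgN) (by positivity)).trans ?_
    rw [ENNReal.ofReal_rpow_of_nonneg (by positivity) (by positivity), ← rpow_natCast,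
      ← rpow_mul hN0.le, show ((2:ℕ):ℝ) * (p / 2) = p by push_cast; ring]
  set S : ℝ := ∫ t' in Ioc (0:ℝ) T, (1 + CrNorm r t' u) ^ p
  have hS0 : 0 ≤ S := integral_nonneg fun s => by have := CrNorm_nonneg r s u; positivity
  have hfin : ENNReal.ofReal ((exp (-r * x) * |I|) ^ p) ≤
      ENNReal.ofReal (J.toReal * (R ^ p * S) * N ^ p) := by
    rw [← ENNReal.ofReal_rpow_of_nonneg (by positivity) hp0.le,
      ENNReal.ofReal_mul (q := N ^ p) (by positivity),
      ENNReal.ofReal_mul (q := R ^ p * S) (by positivity), ENNReal.ofReal_toReal hJtop]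
    refine (ENNReal.rpow_le_rpow hX hp0.le).trans (hchain.trans ?_)
    rw [hJ]
    gcongr
  have hreal := (ENNReal.ofReal_le_ofReal_iff (by positivity)).1 hfin
  calc (exp (-r * x) * |I|) ^ p ≤ J.toReal * (R ^ p * S) * N ^ p := hreal
    _ ≤ (J.toReal + 1) * (R ^ p * S) * N ^ p := by gcongr; linarith
    _ = _ := by field_simp
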